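/- arXiv:1512.05996 — 3 statements merged into one kernel-verified Lean document; each statement's English description precedes it below -/
import Mathlib

section
/- Every non-trivial hereditary graph property π is satisfied either by all complete graphs or by all edgeless graphs; that is, either for every n the complete graph K_n satisfies π, or for every n the edgeless graph on n vertices (the complement of K_n) satisfies π. -/
/-!
Ramsey's theorem follows from Pascal's rule: if a graph has no `(a + 1)`-clique and no independent
set of size `b + 1`, the neighbours of a vertex contain no `a`-clique and its non-neighbours no
independent set of size `b`, so by induction the graph has fewer than `(a + b).choose a` vertices.
If a hereditary property fails for some complete graph and for some edgeless graph, then its members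
contain neither of the two as an induced subgraph; hence they have boundedly many vertices, and
there are only finitely many of them.
-/

section Ramsey

variable {V : Type*} {G : SimpleGraph V}

theorem card_eq_one_add_card_adj_add_card_compl_adj [DecidableRel G.Adj] [DecidableRel Gᶜ.Adj]
    {s : Finset V} {v : V} (hv : v ∈ s) :
    s.card = 1 + (s.filter (G.Adj v)).card + (s.filter (Gᶜ.Adj v)).card := by
  classical
  have hadj : (s.erase v).filter (G.Adj v) = s.filter (G.Adj v) := by
    ext w
    have := G.ne_of_adj (a := v) (b := w)
    grind
  have hcompl : (s.erase v).filter (¬ G.Adj v ·) = s.filter (Gᶜ.Adj v) := by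
    ext w
    simp only [Finset.mem_filter, Finset.mem_erase, SimpleGraph.compl_adj]
    tauto
  rw [← hadj, ← hcompl, add_assoc, Finset.card_filter_add_card_filter_not, add_comm,
    Finset.card_erase_add_one hv]

theorem cliqueFreeOn_one_iff {s : Set V} : G.CliqueFreeOn s 1 ↔ s = ∅ := by
  refine ⟨fun h ↦ Set.eq_empty_of_forall_notMem fun v hv ↦ ?_, ?_⟩
  · exact h (t := {v}) (by simpa using hv) (SimpleGraph.isNClique_one.2 ⟨v, rfl⟩)
  · rintro rfl
    exact G.cliqueFreeOn_empty.2 one_ne_zero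

theorem cliqueFreeOn_filter_adj [DecidableRel G.Adj] {s : Finset V} {v : V} {n : ℕ}
    (hG : G.CliqueFreeOn s (n + 1)) (hv : v ∈ s) : G.CliqueFreeOn (s.filter (G.Adj v)) n := by
  refine (hG.of_succ G hv).subset G fun w hw ↦ ?_
  simpa using hw

theorem card_lt_choose_of_cliqueFreeOn {a b : ℕ} {s : Finset V}
    (hG : G.CliqueFreeOn s (a + 1)) (hGc : Gᶜ.CliqueFreeOn s (b + 1)) :
    s.card < (a + b).choose a := by
  classical
  induction a generalizing b s with
  | zero => simpa [cliqueFreeOn_one_iff] using hG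
  | succ a iha =>
    induction b generalizing s with
    | zero => simpa [cliqueFreeOn_one_iff] using hGc
    | succ b ihb =>
      obtain rfl | ⟨v, hv⟩ := s.eq_empty_or_nonempty
      · exact Nat.choose_pos (Nat.le_add_right _ _)
      have hsub (p : V → Prop) [DecidablePred p] : (↑(s.filter p) : Set V) ⊆ s :=
        Finset.coe_subset.2 (Finset.filter_subset p s)
      have hadj : (s.filter (G.Adj v)).card < (a + (b + 1)).choose a :=
        iha (cliqueFreeOn_filter_adj hG hv) (hGc.subset _ (hsub _))
      have hcompl : (s.filter (Gᶜ.Adj v)).card < (a + 1 + b).choose (a + 1) :=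
        ihb (hG.subset _ (hsub _)) (cliqueFreeOn_filter_adj hGc hv)
      calc s.card
        _ = 1 + (s.filter (G.Adj v)).card + (s.filter (Gᶜ.Adj v)).card :=
          card_eq_one_add_card_adj_add_card_compl_adj hv
        _ < (a + (b + 1)).choose a + (a + 1 + b).choose (a + 1) := by omega
        _ = (a + 1 + (b + 1)).choose (a + 1) := by
          rw [show a + 1 + b = a + (b + 1) by omega, ← Nat.choose_succ_succ', add_right_comm]

theorem cliqueFree_iff_isEmpty_top_embedding {n : ℕ} :
    G.CliqueFree n ↔ IsEmpty ((⊤ : SimpleGraph (Fin n)) ↪g G) :=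
  SimpleGraph.cliqueFree_iff.trans
    ⟨fun h ↦ ⟨fun f ↦ h.false f.toCopy⟩, fun h ↦ ⟨fun f ↦ h.false f.topEmbedding⟩⟩

theorem compl_cliqueFree_iff_isEmpty_bot_embedding {n : ℕ} :
    Gᶜ.CliqueFree n ↔ IsEmpty ((⊥ : SimpleGraph (Fin n)) ↪g G) := by
  rw [cliqueFree_iff_isEmpty_top_embedding, ← compl_bot]
  exact SimpleGraph.Embedding.complEquiv.isEmpty_congr.symm

end Ramsey

/-- Every non-trivial hereditary graph property `π` is satisfied either by
all complete graphs or by all edgeless graphs.  A graph property is modelled as a predicate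
`P n G` on simple graphs `G` on the vertex set `Fin n`, closed under isomorphism.
Heredity: if `G` satisfies `P` then so does every induced subgraph of `G` (a graph `H`
admitting a graph embedding `H ↪g G`, which preserves adjacency and non-adjacency).
Non-triviality: infinitely many graphs (equivalently, infinitely many pairwise
non-isomorphic graphs, since each isomorphism class has only finitely many
representatives on each `Fin n`) satisfy `P`, and infinitely many do not. -/
theorem stmt_0
    (P : ∀ n : ℕ, SimpleGraph (Fin n) → Prop)
    (hiso : ∀ (n : ℕ) (G G' : SimpleGraph (Fin n)), Nonempty (G ≃g G') → P n G → P n G')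
    (hhered : ∀ (m n : ℕ) (H : SimpleGraph (Fin m)) (G : SimpleGraph (Fin n)),
      P n G → Nonempty (H ↪g G) → P m H)
    (hinf : {p : Σ n : ℕ, SimpleGraph (Fin n) | P p.1 p.2}.Infinite)
    (hinf' : {p : Σ n : ℕ, SimpleGraph (Fin n) | ¬ P p.1 p.2}.Infinite) :
    (∀ n : ℕ, P n (⊤ : SimpleGraph (Fin n))) ∨ (∀ n : ℕ, P n (⊥ : SimpleGraph (Fin n))) := by
  by_contra! ⟨⟨a, ha⟩, b, hb⟩
  obtain ⟨⟨n, G⟩, hPG, hn⟩ := hinf.exists_notMem_finset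
    ((Finset.range ((a + b).choose a)).sigma fun _ ↦ Finset.univ)
  have hG : G.CliqueFree a :=
    cliqueFree_iff_isEmpty_top_embedding.2 ⟨fun f ↦ ha (hhered a n ⊤ G hPG ⟨f⟩)⟩
  have hGc : Gᶜ.CliqueFree b :=
    compl_cliqueFree_iff_isEmpty_bot_embedding.2 ⟨fun f ↦ hb (hhered b n ⊥ G hPG ⟨f⟩)⟩
  have hlt : n < (a + b).choose a := by
    simpa using card_lt_choose_of_cliqueFreeOn (s := Finset.univ)
      (hG.mono a.le_succ).cliqueFreeOn (hGc.mono b.le_succ).cliqueFreeOn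
  exact hn (by simpa using hlt)
end

section
/- For every finite simple graph H there exist a natural number n₀ and a real constant α > 0 such that for all n > n₀ there exists a graph G on n vertices with the property that every induced subgraph of G on at least α·log₂ n vertices contains H as an induced subgraph. -/
/-!
A uniformly random graph on `n` vertices works. Fix labelled `k`-sets of vertices pairwise meeting
in at most one vertex. No two of them share a pair of vertices, so independently each one induces
`H` with probability `1 / N`, where `N` is the number of graphs on `k` labelled vertices. The lines
`y = a x + b` with `0 ≤ a, b < p` over `0 ≤ x < k` form such a family of `p²` sets in a grid of only
`k² p` points, so a fixed placement of the grid misses `H` with probability `(1 - 1 / N) ^ (p²)`.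
There are at most `n ^ (k² p)` placements, and the union bound succeeds as soon as
`n ^ (k²) * (1 - 1 / N) ^ p < 1`, which allows `p = O(log n)`.
-/

open Finset Function

section BooleanAlgebra

variable {α ι : Type*} [GeneralizedBooleanAlgebra α]

lemma sdiff_sup_inf_cancel {B K : α} (G : α) (hB : B ≤ K) : (G \ K ⊔ B) ⊓ K = B := by
  rw [inf_sup_right, inf_sdiff_self_left, bot_sup_eq, inf_of_le_left hB]

lemma sdiff_sup_inf_of_disjoint {B K L : α} (G : α) (hB : B ≤ K) (hKL : Disjoint K L) :
    (G \ K ⊔ B) ⊓ L = G ⊓ L := by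
  rw [inf_sup_right, (hKL.mono_left hB).eq_bot, sup_bot_eq, sdiff_inf_right_comm,
    sdiff_eq_self_iff_disjoint.2 (hKL.mono_right inf_le_right)]

variable [Fintype α] [DecidableEq α] [DecidableLE α]

lemma card_eq_card_filter_inf_eq_mul_card_filter_le {A : Finset α} {H K : α} (hH : H ≤ K)
    (hA : ∀ G ∈ A, ∀ B ≤ K, G \ K ⊔ B ∈ A) : #A = #{G ∈ A | G ⊓ K = H} * #{B : α | B ≤ K} := by
  rw [← card_product]
  refine card_nbij' (fun G ↦ (G \ K ⊔ H, G ⊓ K)) (fun x ↦ x.1 \ K ⊔ x.2) ?_ ?_ ?_ ?_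
  · intro G hG
    simpa [sdiff_sup_inf_cancel G hH] using hA G hG H hH
  · intro x hx
    simp only [coe_product, Set.mem_prod, mem_coe, mem_filter, mem_univ, true_and] at hx
    exact hA x.1 hx.1.1 x.2 hx.2
  · intro G _
    simp [sup_sdiff, sdiff_eq_bot_iff.2 hH, sup_comm, sup_inf_sdiff]
  · rintro ⟨G, B⟩ hx
    simp only [coe_product, Set.mem_prod, mem_coe, mem_filter, mem_univ, true_and] at hx
    obtain ⟨⟨-, hG⟩, hB⟩ := hx
    refine Prod.ext ?_ (sdiff_sup_inf_cancel G hB)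
    simp [sup_sdiff, sdiff_eq_bot_iff.2 hB, ← hG, sup_comm, sup_inf_sdiff]

lemma card_filter_inf_ne {A : Finset α} {H K : α} (hH : H ≤ K)
    (hA : ∀ G ∈ A, ∀ B ≤ K, G \ K ⊔ B ∈ A) :
    (#{G ∈ A | G ⊓ K ≠ H} : ℝ) = #A * (1 - (#{B : α | B ≤ K} : ℝ)⁻¹) := by
  have hsplit : (#{G ∈ A | G ⊓ K = H} + #{G ∈ A | G ⊓ K ≠ H} : ℝ) = #A := by
    exact_mod_cast card_filter_add_card_filter_not _
  have hfiber : (#A : ℝ) = #{G ∈ A | G ⊓ K = H} * #{B : α | B ≤ K} := by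
    exact_mod_cast card_eq_card_filter_inf_eq_mul_card_filter_le hH hA
  have hpos : (#{B : α | B ≤ K} : ℝ) ≠ 0 := by
    exact_mod_cast (card_pos.2 ⟨K, by simp⟩).ne'
  rw [mul_sub, mul_one, ← div_eq_mul_inv, ← (eq_div_iff hpos).2 hfiber.symm, ← hsplit,
    add_sub_cancel_left]

/-- For a uniformly random `G`, the traces `G ⊓ K j` on disjoint `K j` are independent, and each is
uniform below `K j`. -/
lemma card_filter_forall_inf_ne {J : Finset ι} {H K : ι → α} (hH : ∀ j ∈ J, H j ≤ K j)
    (hK : (J : Set ι).PairwiseDisjoint K) :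
    (#{G : α | ∀ j ∈ J, G ⊓ K j ≠ H j} : ℝ) =
      Fintype.card α * ∏ j ∈ J, (1 - (#{B : α | B ≤ K j} : ℝ)⁻¹) := by
  classical
  induction J using Finset.induction_on with
  | empty => simp
  | insert j J hj ih =>
    rw [forall_mem_insert] at hH
    rw [coe_insert, Set.pairwiseDisjoint_insert_of_notMem (by simpa using hj)] at hK
    obtain ⟨hK, hKj⟩ := hK
    specialize ih hH.2 hK
    set A : Finset α := {G | ∀ i ∈ J, G ⊓ K i ≠ H i} with hA
    have hclosed : ∀ G ∈ A, ∀ B ≤ K j, G \ K j ⊔ B ∈ A := by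
      intro G hG B hB
      simp only [hA, mem_filter, mem_univ, true_and] at hG ⊢
      intro i hi
      rw [sdiff_sup_inf_of_disjoint G hB (hKj i hi)]
      exact hG i hi
    have hinsert : ({G : α | ∀ i ∈ insert j J, G ⊓ K i ≠ H i} : Finset α) =
        {G ∈ A | G ⊓ K j ≠ H j} := by
      ext G
      simp [hA, and_comm]
    rw [hinsert, card_filter_inf_ne hH.1 hclosed, ih, prod_insert hj]
    ring

end BooleanAlgebra

section RandomGraph

variable {U V W ι : Type*}

lemma map_comap_eq_inf_map_top (φ : W ↪ V) (G : SimpleGraph V) :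
    (G.comap φ).map φ = G ⊓ (⊤ : SimpleGraph W).map φ := by
  ext u v
  simp only [SimpleGraph.map_adj, SimpleGraph.inf_adj, SimpleGraph.comap_adj,
    SimpleGraph.top_adj]
  constructor
  · rintro ⟨a, b, hab, rfl, rfl⟩
    exact ⟨hab, a, b, fun h ↦ hab.ne (congrArg φ h), rfl, rfl⟩
  · rintro ⟨hab, a, b, -, rfl, rfl⟩
    exact ⟨a, b, hab, rfl, rfl⟩

lemma inf_map_top_eq_map_iff_comap_eq (φ : W ↪ V) (G : SimpleGraph V) (H : SimpleGraph W) :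
    G ⊓ (⊤ : SimpleGraph W).map φ = H.map φ ↔ G.comap φ = H := by
  rw [← map_comap_eq_inf_map_top, (SimpleGraph.map_injective φ).eq_iff]

/-- A family of copies of `W` in `V`, any two of which share at most one point, so that no two
contain a common pair of points (a linear hypergraph). -/
def IsLinearFamily (φ : ι → W ↪ V) : Prop :=
  Pairwise fun i j ↦ (Set.range (φ i) ∩ Set.range (φ j)).Subsingleton

lemma IsLinearFamily.trans {φ : ι → W ↪ U} (hφ : IsLinearFamily φ) (f : U ↪ V) :
    IsLinearFamily fun j ↦ (φ j).trans f := by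
  intro i j hij
  simp only [Embedding.coe_trans, Set.range_comp, ← Set.image_inter f.injective]
  exact (hφ hij).image f

lemma IsLinearFamily.disjoint_map_top {φ : ι → W ↪ V} (hφ : IsLinearFamily φ) :
    Pairwise (Disjoint on fun j ↦ (⊤ : SimpleGraph W).map (φ j)) := by
  intro i j hij
  rw [onFun, SimpleGraph.disjoint_left]
  intro u v hi hj
  have hne := hi.ne
  rw [SimpleGraph.map_adj] at hi hj
  obtain ⟨a, b, -, ha, hb⟩ := hi
  obtain ⟨c, d, -, hc, hd⟩ := hj
  exact hne (hφ hij ⟨⟨a, ha⟩, c, hc⟩ ⟨⟨b, hb⟩, d, hd⟩)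

variable [Fintype V] [Finite W]

open scoped Classical in
lemma card_filter_le_map_top (φ : W ↪ V) :
    #{G : SimpleGraph V | G ≤ (⊤ : SimpleGraph W).map φ} = Nat.card (SimpleGraph W) := by
  have := Fintype.ofFinite W
  rw [Nat.card_eq_fintype_card, ← card_univ]
  refine card_nbij' (SimpleGraph.comap φ) (SimpleGraph.map φ) ?_ ?_ ?_ ?_
  · simp
  · intro G _
    simpa using SimpleGraph.map_monotone φ le_top
  · intro G hG
    simpa [map_comap_eq_inf_map_top] using hG
  · intro G _
    exact SimpleGraph.comap_map_eq φ G

open scoped Classical in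
lemma IsLinearFamily.card_filter_forall_comap_ne [Fintype ι] {φ : ι → W ↪ V} (hφ : IsLinearFamily φ)
    (H : SimpleGraph W) :
    (#{G : SimpleGraph V | ∀ j, G.comap (φ j) ≠ H} : ℝ) =
      Fintype.card (SimpleGraph V) *
        (1 - (Nat.card (SimpleGraph W) : ℝ)⁻¹) ^ Fintype.card ι := by
  simpa [inf_map_top_eq_map_iff_comap_eq, card_filter_le_map_top] using
    card_filter_forall_inf_ne (J := univ)
      (fun j _ ↦ SimpleGraph.map_monotone (φ j) (le_top (a := H)))
      fun i _ j _ hij ↦ hφ.disjoint_map_top hij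

lemma IsLinearFamily.exists_forall_exists_comap_eq [Fintype U] [Fintype ι] {φ : ι → W ↪ U}
    (hφ : IsLinearFamily φ) (H : SimpleGraph W)
    (hlt : (Fintype.card V : ℝ) ^ Fintype.card U *
      (1 - (Nat.card (SimpleGraph W) : ℝ)⁻¹) ^ Fintype.card ι < 1) :
    ∃ G : SimpleGraph V, ∀ f : U ↪ V, ∃ j, G.comap ((φ j).trans f) = H := by
  classical
  by_contra! hbad
  set q : ℝ := (1 - (Nat.card (SimpleGraph W) : ℝ)⁻¹) ^ Fintype.card ι
  have hq : 0 ≤ q := pow_nonneg (sub_nonneg.2 (Nat.cast_inv_le_one _)) _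
  have hcover : (univ : Finset (SimpleGraph V)) ⊆
      univ.biUnion fun f : U ↪ V ↦ {G | ∀ j, G.comap ((φ j).trans f) ≠ H} := by
    intro G _
    simpa using hbad G
  have hplacements : (Fintype.card (U ↪ V) : ℝ) ≤ Fintype.card V ^ Fintype.card U := by
    rw [Fintype.card_embedding_eq]
    exact_mod_cast Nat.descFactorial_le_pow _ _
  have hcard : (0 : ℝ) < Fintype.card (SimpleGraph V) := by exact_mod_cast Fintype.card_pos
  have hlt_self : (Fintype.card (SimpleGraph V) : ℝ) < Fintype.card (SimpleGraph V) := calc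
    (Fintype.card (SimpleGraph V) : ℝ)
        ≤ ∑ f : U ↪ V, (#{G : SimpleGraph V | ∀ j, G.comap ((φ j).trans f) ≠ H} : ℝ) := by
      exact_mod_cast (card_le_card hcover).trans card_biUnion_le
    _ = Fintype.card (U ↪ V) * (Fintype.card (SimpleGraph V) * q) := by
      rw [sum_congr rfl fun f _ ↦ (hφ.trans f).card_filter_forall_comap_ne H, sum_const, card_univ,
        nsmul_eq_mul]
    _ ≤ Fintype.card V ^ Fintype.card U * (Fintype.card (SimpleGraph V) * q) := by gcongr
    _ = Fintype.card (SimpleGraph V) * (Fintype.card V ^ Fintype.card U * q) := by ring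
    _ < Fintype.card (SimpleGraph V) := mul_lt_of_lt_one_right hcard hlt
  exact hlt_self.false

lemma IsLinearFamily.exists_forall_nonempty_embedding_induce [Fintype U] [Fintype ι] {φ : ι → W ↪ U}
    (hφ : IsLinearFamily φ) (H : SimpleGraph W)
    (hlt : (Fintype.card V : ℝ) ^ Fintype.card U *
      (1 - (Nat.card (SimpleGraph W) : ℝ)⁻¹) ^ Fintype.card ι < 1) :
    ∃ G : SimpleGraph V, ∀ S : Finset V, Fintype.card U ≤ #S →
      Nonempty (H ↪g G.induce (S : Set V)) := by
  obtain ⟨G, hG⟩ := hφ.exists_forall_exists_comap_eq H hlt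
  refine ⟨G, fun S hS ↦ ?_⟩
  obtain ⟨f⟩ : Nonempty (U ↪ (S : Set V)) := Embedding.nonempty_of_card_le (by simpa using hS)
  obtain ⟨j, rfl⟩ := hG (f.trans (Embedding.subtype _))
  exact ⟨SimpleGraph.Embedding.comap ((φ j).trans f) (G.induce (S : Set V))⟩

end RandomGraph

section Grid

/-- The points of the line `y = a x + b` with `0 ≤ x < k`, where `(a, b) = l`. Since `a, b < p`,
they lie in a `k × k p` grid of natural numbers. -/
def gridLine (k p : ℕ) (l : Fin p × Fin p) : Fin k ↪ Fin k × Fin (k * p) where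
  toFun x := (x, ⟨l.1 * x + l.2, by
    calc (l.1 * x + l.2 : ℕ) < p * x + p :=
          add_lt_add_of_le_of_lt (Nat.mul_le_mul_right _ l.1.is_le') l.2.is_lt
      _ = (x + 1) * p := by ring
      _ ≤ k * p := Nat.mul_le_mul_right p x.is_lt⟩)
  inj' _ _ h := congrArg Prod.fst h

lemma isLinearFamily_gridLine (k p : ℕ) : IsLinearFamily (gridLine k p) := by
  rintro ⟨a, b⟩ ⟨c, d⟩ hne _ ⟨⟨x, rfl⟩, x', hx⟩ _ ⟨⟨y, rfl⟩, y', hy⟩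
  obtain rfl : x' = x := congrArg Prod.fst hx
  obtain rfl : y' = y := congrArg Prod.fst hy
  by_contra hxy
  have hx : (c * x' + d : ℤ) = a * x' + b := by
    exact_mod_cast congrArg (fun z ↦ (z.2 : ℕ)) hx
  have hy : (c * y' + d : ℤ) = a * y' + b := by
    exact_mod_cast congrArg (fun z ↦ (z.2 : ℕ)) hy
  have hslope : ((c : ℤ) - a) * ((x' : ℤ) - y') = 0 := by linear_combination hx - hy
  rcases mul_eq_zero.1 hslope with hca | hxy'
  · obtain rfl : c = a := by omega
    obtain rfl : b = d := Fin.ext (by exact_mod_cast (add_left_cancel hx).symm)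
    exact hne rfl
  · exact hxy (congrArg _ (by omega))

end Grid

lemma log_le_logb_two {x : ℝ} (hx : 1 ≤ x) : Real.log x ≤ Real.logb 2 x := by
  rw [Real.logb, le_div_iff₀ (Real.log_pos one_lt_two)]
  exact mul_le_of_le_one_right (Real.log_nonneg hx) (by linarith [Real.log_two_lt_d9])

lemma pow_mul_one_sub_inv_pow_lt_one {a p : ℕ} {x N : ℝ} (hx : 0 < x) (hN : 1 ≤ N)
    (hp : a * N * Real.log x < p) : x ^ a * (1 - N⁻¹) ^ p < 1 := by
  have hexp : x ^ a = Real.exp (a * Real.log x) := by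
    rw [Real.exp_nat_mul, Real.exp_log hx]
  have hnonneg : 0 ≤ 1 - N⁻¹ := sub_nonneg.2 (inv_le_one_of_one_le₀ hN)
  calc x ^ a * (1 - N⁻¹) ^ p
      ≤ Real.exp (a * Real.log x) * Real.exp (-N⁻¹) ^ p := by
        rw [hexp]
        gcongr
        exact Real.one_sub_le_exp_neg _
    _ = Real.exp (a * Real.log x - p / N) := by
        rw [← Real.exp_nat_mul, ← Real.exp_add]
        ring_nf
    _ < 1 := by
        rw [Real.exp_lt_one_iff, sub_neg, lt_div_iff₀ (by linarith)]
        linarith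

lemma exists_forall_nonempty_embedding_induce_of_log_lt {V : Type*} [Fintype V] [Nonempty V]
    {k p : ℕ} (H : SimpleGraph (Fin k))
    (hp : ((k ^ 2 : ℕ) : ℝ) * Nat.card (SimpleGraph (Fin k)) * Real.log (Fintype.card V) < p) :
    ∃ G : SimpleGraph V, ∀ S : Finset V, k ^ 2 * p ≤ #S →
      Nonempty (H ↪g G.induce (S : Set V)) := by
  have hN : (1 : ℝ) ≤ Nat.card (SimpleGraph (Fin k)) := by exact_mod_cast Nat.card_pos
  have hp0 : p ≠ 0 := by
    rintro rfl
    exact hp.not_ge (by simpa using by positivity)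
  have hlt := pow_mul_one_sub_inv_pow_lt_one
    (show (0 : ℝ) < Fintype.card V by exact_mod_cast Fintype.card_pos) hN hp
  have hlt' := pow_lt_one₀
    (mul_nonneg (by positivity) (pow_nonneg (sub_nonneg.2 (inv_le_one_of_one_le₀ hN)) p)) hlt hp0
  obtain ⟨G, hG⟩ := (isLinearFamily_gridLine k p).exists_forall_nonempty_embedding_induce
    (V := V) H (by simpa [mul_pow, ← pow_mul, sq, mul_assoc] using hlt')
  exact ⟨G, fun S hS ↦ hG S (by simpa [sq, mul_assoc] using hS)⟩

/-- For every finite simple graph `H` there exist `n₀ : ℕ` and a real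
constant `α > 0` such that for all `n > n₀` there is a graph `G` on `n` vertices in which
every induced subgraph on at least `α·log₂ n` vertices contains `H` as an induced
subgraph. -/
theorem stmt_6 (k : ℕ) (H : SimpleGraph (Fin k)) :
    ∃ (n₀ : ℕ) (α : ℝ), 0 < α ∧ ∀ n : ℕ, n > n₀ →
      ∃ G : SimpleGraph (Fin n), ∀ S : Finset (Fin n),
        α * Real.logb 2 (n : ℝ) ≤ (S.card : ℝ) →
        Nonempty (H ↪g (G.induce (S : Set (Fin n)))) := by
  set C : ℝ := ((k ^ 2 : ℕ) : ℝ) * Nat.card (SimpleGraph (Fin k))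
  have hC : 0 ≤ C := by positivity
  refine ⟨1, k ^ 2 * (C + 1) + 1, by positivity, fun n hn ↦ ?_⟩
  have : NeZero n := ⟨by omega⟩
  have hlog : Real.log (Fintype.card (Fin n)) ≤ Real.logb 2 n := by
    rw [Fintype.card_fin]
    exact log_le_logb_two (by exact_mod_cast hn.le)
  have hlogb : 1 ≤ Real.logb 2 n := by
    rw [Real.le_logb_iff_rpow_le one_lt_two (by positivity), Real.rpow_one]
    exact_mod_cast hn
  obtain ⟨G, hG⟩ := exists_forall_nonempty_embedding_induce_of_log_lt
    (p := ⌊C * Real.logb 2 n⌋₊ + 1) H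
    ((mul_le_mul_of_nonneg_left hlog hC).trans_lt (by exact_mod_cast Nat.lt_floor_add_one _))
  refine ⟨G, fun S hS ↦ hG S ?_⟩
  have hp : (⌊C * Real.logb 2 n⌋₊ + 1 : ℝ) ≤ (C + 1) * Real.logb 2 n := by
    linarith [Nat.floor_le (mul_nonneg hC (zero_le_one.trans hlogb))]
  have : (k : ℝ) ^ 2 * (⌊C * Real.logb 2 n⌋₊ + 1) ≤ #S := calc
    _ ≤ (k : ℝ) ^ 2 * ((C + 1) * Real.logb 2 n) := by gcongr
    _ ≤ (k ^ 2 * (C + 1) + 1) * Real.logb 2 n := by linarith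
    _ ≤ #S := hS
  exact_mod_cast this
end

section
/- Let m ≥ 1 and σ ≥ 1 be natural numbers, and let G be the graph whose vertex set is partitioned into sets V₁, …, V_m, each of size σ, with a designated vertex c_i ∈ V_i for each i < m, and whose edges are: every pair of distinct vertices within the same V_i is adjacent, and a vertex u ∈ V_i is adjacent to a vertex w ∈ V_j with i < j if and only if u ≠ c_i. Then the maximum size of an independent set in G equals m; in particular, {c₁, …, c_{m−1}} together with any single vertex of V_m is a maximum independent set. -/
/-- A set of vertices is independent in a graph if no two of its members are adjacent. -/
def GraphIsIndepSet {V : Type*} (G : SimpleGraph V) (S : Set V) : Prop :=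
  ∀ u ∈ S, ∀ w ∈ S, ¬ G.Adj u w

/-!
Each layer is a clique, so the layer map is a proper colouring of the complement of the graph; an
independent set is a clique of the complement, hence has at most as many vertices as there are
layers. Conversely, choose one vertex in every layer, the designated one whenever the layer is not
maximal: of two chosen vertices in comparable layers, the lower one is designated and therefore
has no neighbour in the higher layer.
-/

open Function

variable {V ι : Type*}

theorem graphIsIndepSet_iff_isIndepSet {G : SimpleGraph V} {S : Set V} :
    GraphIsIndepSet G S ↔ G.IsIndepSet S :=
  ⟨fun h u hu w hw _ => h u hu w hw, fun h _ hu _ hw hadj => h hu hw hadj.ne hadj⟩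

theorem card_le_card_of_isIndepSet_of_isClique_fiber [Fintype ι] {G : SimpleGraph V} {f : V → ι}
    (hf : ∀ i, G.IsClique (f ⁻¹' {i})) {S : Finset V} (hS : G.IsIndepSet S) :
    S.card ≤ Fintype.card ι := by
  have f_ne_of_compl_adj {u w : V} (huw : Gᶜ.Adj u w) : f u ≠ f w := fun hfuw =>
    huw.2 (hf (f w) hfuw rfl huw.1)
  exact (G.isClique_compl.2 hS).card_le_of_coloring (.mk f f_ne_of_compl_adj)

/-- The graph of the theorem, for layers `layer ⁻¹' {i}` of arbitrary sizes indexed by a preorder: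
every layer is a clique, and a vertex is adjacent to the vertices of strictly higher layers unless
it is the designated vertex `c i` of its layer `i`. Vertices in distinct layers that are not
strictly comparable are not adjacent. -/
def layeredGraph [Preorder ι] (layer : V → ι) (c : ι → V) : SimpleGraph V where
  Adj u w := (layer u = layer w ∧ u ≠ w) ∨ (layer u < layer w ∧ u ≠ c (layer u)) ∨
    (layer w < layer u ∧ w ≠ c (layer w))
  symm := ⟨fun _ _ => Or.imp (And.imp Eq.symm Ne.symm) Or.symm⟩
  loopless := ⟨fun u => by simp⟩

namespace layeredGraph

variable [Preorder ι] {layer : V → ι} {c : ι → V}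

theorem isClique_fiber (i : ι) : (layeredGraph layer c).IsClique (layer ⁻¹' {i}) :=
  fun _ hu _ hw hne => Or.inl ⟨hu.trans hw.symm, hne⟩

theorem isIndepSet_range {s : ι → V} (hs : LeftInverse layer s)
    (hsc : ∀ i, ¬IsMax i → s i = c i) : (layeredGraph layer c).IsIndepSet (Set.range s) := by
  have eq_designated_of_lt {i j : ι} (hij : i < j) : s i = c i := hsc i hij.not_isMax
  rintro _ ⟨i, rfl⟩ _ ⟨j, rfl⟩ hne hadj
  simp only [layeredGraph, hs i, hs j] at hadj
  rcases hadj with ⟨hij, -⟩ | ⟨hij, hi⟩ | ⟨hji, hj⟩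
  · exact hne (congrArg s hij)
  · exact hi (eq_designated_of_lt hij)
  · exact hj (eq_designated_of_lt hji)

end layeredGraph

theorem eq_layeredGraph_fst {κ : Type*} [Preorder ι] {c : ι → κ} {G : SimpleGraph (ι × κ)}
    (hG : ∀ u w : ι × κ, G.Adj u w ↔
      (u.1 = w.1 ∧ u.2 ≠ w.2) ∨ (u.1 < w.1 ∧ u.2 ≠ c u.1) ∨ (w.1 < u.1 ∧ w.2 ≠ c w.1)) :
    G = layeredGraph Prod.fst fun i => (i, c i) := by
  ext u w
  simp only [hG, layeredGraph, ne_eq, Prod.ext_iff, true_and]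
  tauto

theorem val_lt_sub_one_of_not_isMax {m : ℕ} {i : Fin m} (hi : ¬IsMax i) : (i : ℕ) < m - 1 := by
  obtain ⟨j, hij⟩ := not_isMax_iff.1 hi
  omega

theorem stmt_8_general [Fintype ι] [Preorder ι] [DecidableEq V] (layer : V → ι) (c : ι → V) :
    (∀ S : Finset V, GraphIsIndepSet (layeredGraph layer c) ↑S → S.card ≤ Fintype.card ι) ∧
    (∀ s : ι → V, LeftInverse layer s → (∀ i, ¬IsMax i → s i = c i) →
      GraphIsIndepSet (layeredGraph layer c) ↑(Finset.univ.image s) ∧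
      (Finset.univ.image s).card = Fintype.card ι) := by
  simp only [graphIsIndepSet_iff_isIndepSet, Finset.coe_image, Finset.coe_univ, Set.image_univ]
  exact ⟨fun _ => card_le_card_of_isIndepSet_of_isClique_fiber layeredGraph.isClique_fiber,
    fun s hs hsc => ⟨layeredGraph.isIndepSet_range hs hsc,
      Finset.card_image_of_injective _ hs.injective⟩⟩

/-- Let `m, σ ≥ 1` and let `G` be the graph on the vertex set
`Fin m × Fin σ` (layer `i` is `V_i = {i} × Fin σ`, with designated vertex `c_i = (i, c i)`),
where two distinct vertices in the same layer are always adjacent, and `u` in layer `i` is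
adjacent to `w` in layer `j > i` iff `u` is not the designated vertex of layer `i`.
Then the independence number of `G` is `m`; in particular, the designated vertices of the
first `m − 1` layers together with any single vertex `(m−1, v)` of the last layer form a
maximum independent set. -/
theorem stmt_8 (m σ : ℕ) (hm : 1 ≤ m) (hσ : 1 ≤ σ) (c : Fin m → Fin σ)
    (G : SimpleGraph (Fin m × Fin σ))
    (hG : ∀ u w : Fin m × Fin σ, G.Adj u w ↔
      (u.1 = w.1 ∧ u.2 ≠ w.2) ∨ (u.1 < w.1 ∧ u.2 ≠ c u.1) ∨ (w.1 < u.1 ∧ w.2 ≠ c w.1)) :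
    (∀ S : Finset (Fin m × Fin σ), GraphIsIndepSet G ↑S → S.card ≤ m) ∧
    (∀ v : Fin σ,
      GraphIsIndepSet G
        ↑(Finset.image (fun i : Fin m => if (i : ℕ) < m - 1 then (i, c i) else (i, v))
          Finset.univ) ∧
      (Finset.image (fun i : Fin m => if (i : ℕ) < m - 1 then (i, c i) else (i, v))
        Finset.univ).card = m) := by
  obtain rfl := eq_layeredGraph_fst hG
  obtain ⟨card_le, isIndepSet_image⟩ := stmt_8_general Prod.fst fun i : Fin m => (i, c i)
  simp only [Fintype.card_fin] at card_le isIndepSet_image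
  exact ⟨card_le, fun v => isIndepSet_image _ (fun i => by split_ifs <;> rfl)
    fun i hi => if_pos (val_lt_sub_one_of_not_isMax hi)⟩
end
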